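/- For real θ with 0 ≤ θ ≤ π, the dilogarithm on the unit circle satisfies Li₂(e^{2iθ}) = π²/6 + θ(θ-π) + 2i·Λ(θ), where Λ is the Lobachevsky function. -/

import Mathlib

open Complex

/-- The dilogarithm function `Li₂(z) = -∫₀^z log(1-u)/u du`. -/
noncomputable def Li2 (z : ℂ) : ℂ :=
  -∫ t in (0:ℝ)..1, Complex.log (1 - (t : ℂ) * z) / (t : ℂ)

/-- The Lobachevsky function `Λ(θ) = -∫₀^θ log|2 sin t| dt`. -/
noncomputable def Lob (θ : ℝ) : ℝ :=
  -∫ t in (0:ℝ)..θ, Real.log |2 * Real.sin t|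

lemma Li2_hasSum (z : ℂ) (hz : ‖z‖ = 1) :
    HasSum (fun n : ℕ => z ^ n / (n : ℂ) ^ 2) (Li2 z) := by
  have hint : ∀ n : ℕ, ∫ t in Set.Ioo (0:ℝ) 1, t ^ (n - 1) = if n = 0 then 1 else 1 / (n : ℝ) := by
    intro n
    rw [← MeasureTheory.integral_Ioc_eq_integral_Ioo,
      ← intervalIntegral.integral_of_le zero_le_one, integral_pow]
    rcases n with _ | n <;> simp
  have hi : ∀ n : ℕ, MeasureTheory.Integrable (fun t : ℝ => z ^ n / (n : ℂ) * (t : ℂ) ^ (n - 1))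
      (MeasureTheory.volume.restrict (Set.Ioo (0:ℝ) 1)) := by
    intro n
    have : Continuous (fun t : ℝ => z ^ n / (n : ℂ) * (t : ℂ) ^ (n - 1)) := by fun_prop
    exact (this.integrableOn_Icc (a := 0) (b := 1)).mono_set Set.Ioo_subset_Icc_self
  have key := MeasureTheory.hasSum_integral_of_summable_integral_norm hi ?_
  · convert! key using 1
    · ext n
      rw [MeasureTheory.integral_const_mul]
      have : ∫ t in Set.Ioo (0:ℝ) 1, (t : ℂ) ^ (n - 1)
          = ((∫ t in Set.Ioo (0:ℝ) 1, t ^ (n - 1) : ℝ) : ℂ) := by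
        have h := integral_ofReal (𝕜 := ℂ) (μ := MeasureTheory.volume.restrict (Set.Ioo (0:ℝ) 1))
          (f := fun t : ℝ => t ^ (n - 1))
        simpa using h
      rw [this, hint]
      rcases eq_or_ne n 0 with rfl | hn
      · simp
      · have : (n : ℂ) ≠ 0 := by exact_mod_cast hn
        simp only [hn, if_false]; push_cast; field_simp
    · unfold Li2
      rw [intervalIntegral.integral_of_le zero_le_one, MeasureTheory.integral_Ioc_eq_integral_Ioo,
        ← MeasureTheory.integral_neg]
      apply MeasureTheory.setIntegral_congr_fun measurableSet_Ioo
      intro t ht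
      have ht0 : (t : ℂ) ≠ 0 := by exact_mod_cast ht.1.ne'
      have h := (Complex.hasSum_taylorSeries_neg_log (z := (t : ℂ) * z) (by
        rw [norm_mul, hz, mul_one, Complex.norm_real, Real.norm_of_nonneg ht.1.le]
        exact ht.2)).div_const (t : ℂ)
      simp only
      rw [← neg_div, ← h.tsum_eq]
      congr 1
      ext n
      rcases n with _ | n
      · simp
      · simp only [Nat.add_sub_cancel]
        rw [mul_pow, pow_succ (t : ℂ)]
        field_simp
  · have : ∀ n : ℕ, ∫ t in Set.Ioo (0:ℝ) 1, ‖z ^ n / (n : ℂ) * (t : ℂ) ^ (n - 1)‖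
        = 1 / (n : ℝ) ^ 2 := by
      intro n
      have : ∫ t in Set.Ioo (0:ℝ) 1, ‖z ^ n / (n : ℂ) * (t : ℂ) ^ (n - 1)‖
          = ∫ t in Set.Ioo (0:ℝ) 1, 1 / (n : ℝ) * t ^ (n - 1) := by
        apply MeasureTheory.setIntegral_congr_fun measurableSet_Ioo
        intro t ht
        simp [hz, abs_of_pos ht.1]
      rw [this, MeasureTheory.integral_const_mul, hint]
      rcases eq_or_ne n 0 with rfl | hn
      · simp
      · simp only [hn, if_false]; field_simp
    simp_rw [this]
    exact Real.summable_one_div_nat_pow.mpr one_lt_two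

lemma cos_sum (θ : ℝ) (h0 : 0 ≤ θ) (h1 : θ ≤ Real.pi) :
    HasSum (fun n : ℕ => Real.cos (2 * n * θ) / (n : ℝ) ^ 2)
      (Real.pi ^ 2 / 6 + θ * (θ - Real.pi)) := by
  have hp := Real.pi_pos
  have := hasSum_one_div_nat_pow_mul_cos one_ne_zero (x := θ / Real.pi)
    ⟨by positivity, by rw [div_le_one hp]; exact h1⟩
  convert! this using 1
  · ext n
    rw [show 2 * Real.pi * n * (θ / Real.pi) = 2 * n * θ by field_simp]
    ring
  · simp [Polynomial.bernoulli, Finset.sum_range_succ, bernoulli_one, bernoulli_two,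
      Polynomial.eval_add, Polynomial.eval_monomial, Nat.factorial]
    field_simp
    ring

lemma norm_sq_aux (r t : ℝ) :
    ‖1 - (r : ℂ) * Complex.exp (2 * Complex.I * t)‖ ^ 2
      = (1 - r) ^ 2 + 4 * r * Real.sin t ^ 2 := by
  have : Complex.exp (2 * Complex.I * t) = Real.cos (2 * t) + Real.sin (2 * t) * Complex.I := by
    rw [show 2 * Complex.I * (t : ℂ) = ((2 * t : ℝ) : ℂ) * Complex.I by push_cast; ring,
      Complex.exp_mul_I, Complex.ofReal_cos, Complex.ofReal_sin]
  rw [this, ← Complex.normSq_eq_norm_sq, Complex.normSq_apply]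
  simp only [Complex.sub_re, Complex.sub_im, Complex.mul_re, Complex.mul_im, Complex.add_re,
    Complex.add_im, Complex.ofReal_re, Complex.ofReal_im, Complex.I_re, Complex.I_im,
    Complex.one_re, Complex.one_im]
  have h1 := Real.sin_sq_add_cos_sq (2 * t)
  have h2 := Real.cos_two_mul t
  have h3 := Real.sin_sq_add_cos_sq t
  linear_combination r ^ 2 * h1 - 2 * r * h2 - 4 * r * h3

lemma sin_sum_r (θ r : ℝ) (hr0 : 0 ≤ r) (hr : r < 1) :
    HasSum (fun n : ℕ => r ^ n * Real.sin (2 * n * θ) / (n : ℝ) ^ 2)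
      (-2 * ∫ t in (0:ℝ)..θ, Real.log ‖1 - (r : ℂ) * Complex.exp (2 * Complex.I * t)‖) := by
  have hs : Summable (fun n : ℕ => r ^ n) := summable_geometric_of_lt_one hr0 hr
  have key := intervalIntegral.hasSum_integral_of_dominated_convergence
    (a := 0) (b := θ) (μ := MeasureTheory.volume)
    (F := fun (n : ℕ) (t : ℝ) => r ^ n * Real.cos (2 * n * t) / n)
    (f := fun t => -Real.log ‖1 - (r : ℂ) * Complex.exp (2 * Complex.I * t)‖)
    (fun n _ => r ^ n)
    (fun n => Continuous.aestronglyMeasurable (by fun_prop)) ?_ ?_ ?_ ?_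
  · convert! key.mul_left 2 using 1
    · ext n
      rcases eq_or_ne n 0 with rfl | hn
      · simp
      have : (n : ℝ) ≠ 0 := by exact_mod_cast hn
      rw [intervalIntegral.integral_div, intervalIntegral.integral_const_mul,
        intervalIntegral.integral_comp_mul_left (fun x => Real.cos x) (by positivity), integral_cos]
      simp
      field_simp
    · rw [intervalIntegral.integral_neg]; ring
  · intro n
    refine Filter.Eventually.of_forall fun t _ => ?_
    rw [norm_div, norm_mul, norm_pow, Real.norm_of_nonneg hr0]
    rcases eq_or_ne n 0 with rfl | hn
    · simp
    have h1 : (1:ℝ) ≤ n := by exact_mod_cast Nat.one_le_iff_ne_zero.mpr hn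
    have h2 := Real.abs_cos_le_one (2 * n * t)
    rw [Real.norm_eq_abs, Real.norm_of_nonneg (by positivity : (0:ℝ) ≤ n)]
    rw [div_le_iff₀ (by positivity)]
    exact mul_le_mul_of_nonneg_left (h2.trans h1) (by positivity)
  · exact Filter.Eventually.of_forall fun t _ => hs
  · exact intervalIntegrable_const
  · refine Filter.Eventually.of_forall fun t _ => ?_
    have e : 2 * Complex.I * (t : ℂ) = ((2 * t : ℝ) : ℂ) * Complex.I := by push_cast; ring
    have h := Complex.hasSum_re (Complex.hasSum_taylorSeries_neg_log
      (z := (r : ℂ) * Complex.exp (2 * Complex.I * t)) (by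
        rw [norm_mul, e, Complex.norm_exp_ofReal_mul_I, Complex.norm_real,
          Real.norm_of_nonneg hr0, mul_one]; exact hr))
    convert! h using 1
    · ext n
      rw [mul_pow, ← Complex.exp_nat_mul,
        show (n : ℂ) * (2 * Complex.I * t) = ((2 * n * t : ℝ) : ℂ) * Complex.I by push_cast; ring,
        Complex.div_natCast_re, ← Complex.ofReal_pow, Complex.re_ofReal_mul,
        Complex.exp_ofReal_mul_I_re]
    · rw [Complex.neg_re, Complex.log_re]

lemma sin_sum (θ : ℝ) :
    HasSum (fun n : ℕ => Real.sin (2 * n * θ) / (n : ℝ) ^ 2) (2 * Lob θ) := by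
  have hb : ∀ n : ℕ, ‖Real.sin (2 * n * θ) / (n : ℝ) ^ 2‖ ≤ 1 / (n : ℝ) ^ 2 := by
    intro n
    rw [norm_div, Real.norm_eq_abs, norm_pow, Real.norm_natCast]
    gcongr
    exact Real.abs_sin_le_one _
  have hsum : Summable (fun n : ℕ => 1 / (n : ℝ) ^ 2) :=
    Real.summable_one_div_nat_pow.mpr one_lt_two
  have hs : Summable (fun n : ℕ => Real.sin (2 * n * θ) / (n : ℝ) ^ 2) :=
    Summable.of_norm_bounded hsum hb
  have hev : ∀ᶠ r : ℝ in nhdsWithin 1 (Set.Iio 1), 1 / 4 < r ∧ r < 1 :=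
    Ioo_mem_nhdsLT (by norm_num)
  have L1 : Filter.Tendsto (fun r : ℝ => ∑' n : ℕ, r ^ n * Real.sin (2 * n * θ) / (n : ℝ) ^ 2)
      (nhdsWithin 1 (Set.Iio 1)) (nhds (∑' n : ℕ, Real.sin (2 * n * θ) / (n : ℝ) ^ 2)) := by
    refine tendsto_tsum_of_dominated_convergence hsum ?_ ?_
    · intro n
      have : Continuous (fun r : ℝ => r ^ n * Real.sin (2 * n * θ) / (n : ℝ) ^ 2) := by fun_prop
      simpa using (this.tendsto 1).mono_left nhdsWithin_le_nhds
    · filter_upwards [hev] with r hr n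
      refine le_trans ?_ (hb n)
      rw [mul_div_assoc, norm_mul, norm_pow, Real.norm_of_nonneg (by linarith [hr.1])]
      exact mul_le_of_le_one_left (norm_nonneg _) (pow_le_one₀ (by linarith [hr.1]) hr.2.le)
  have hsin : ∀ᵐ t : ℝ, Real.sin t ≠ 0 := by
    have : ({t : ℝ | Real.sin t = 0}).Countable := by
      have : {t : ℝ | Real.sin t = 0} ⊆ Set.range (fun n : ℤ => (n : ℝ) * Real.pi) := by
        intro t ht
        exact Real.sin_eq_zero_iff.mp ht
      exact (Set.countable_range _).mono this
    exact MeasureTheory.measure_eq_zero_iff_ae_notMem.mp (this.measure_zero MeasureTheory.volume)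
  have L2 : Filter.Tendsto (fun r : ℝ => ∫ t in (0:ℝ)..θ,
        Real.log ‖1 - (r : ℂ) * Complex.exp (2 * Complex.I * t)‖)
      (nhdsWithin 1 (Set.Iio 1)) (nhds (∫ t in (0:ℝ)..θ, Real.log |2 * Real.sin t|)) := by
    have hnorm : ∀ t : ℝ, |2 * Real.sin t| = ‖1 - ((1:ℝ) : ℂ) * Complex.exp (2 * Complex.I * t)‖ := by
      intro t
      rw [← abs_of_nonneg (norm_nonneg (1 - ((1:ℝ) : ℂ) * Complex.exp (2 * Complex.I * t))),
        ← sq_eq_sq_iff_abs_eq_abs, norm_sq_aux]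
      ring
    refine intervalIntegral.tendsto_integral_filter_of_dominated_convergence
      (fun t => Real.log 2 + ‖(Real.log ∘ Real.sin) t‖) ?_ ?_ ?_ ?_
    · refine Filter.Eventually.of_forall fun r => ?_
      exact (Measurable.aestronglyMeasurable (by fun_prop))
    · filter_upwards [hev] with r hr
      filter_upwards [hsin] with t ht _
      set N := ‖1 - (r : ℂ) * Complex.exp (2 * Complex.I * t)‖ with hN
      have hsq : N ^ 2 = (1 - r) ^ 2 + 4 * r * Real.sin t ^ 2 := norm_sq_aux r t
      have hs1 : Real.sin t ^ 2 ≤ 1 := Real.sin_sq_le_one t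
      have hN0 : 0 ≤ N := norm_nonneg _
      have hlow : |Real.sin t| ≤ N := by
        refine abs_le_of_sq_le_sq ?_ hN0
        nlinarith [sq_nonneg (1 - r), sq_nonneg (Real.sin t), hr.1]
      have hhigh : N ≤ 2 := by
        refine (abs_le_of_sq_le_sq' ?_ (by norm_num)).2
        nlinarith [hr.1, hr.2]
      have hspos : 0 < |Real.sin t| := abs_pos.mpr ht
      have a1 := Real.log_le_log hspos hlow
      have a2 := Real.log_le_log (hspos.trans_le hlow) hhigh
      have a3 : 0 ≤ Real.log 2 := Real.log_nonneg (by norm_num)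
      rw [Real.log_abs] at a1
      simp only [Function.comp, Real.norm_eq_abs]
      rw [abs_le]
      constructor
      · linarith [neg_abs_le (Real.log (Real.sin t))]
      · linarith [abs_nonneg (Real.log (Real.sin t))]
    · exact intervalIntegrable_const.add intervalIntegrable_log_sin.norm
    · filter_upwards [hsin] with t ht _
      rw [hnorm]
      have hne : ‖1 - ((1:ℝ) : ℂ) * Complex.exp (2 * Complex.I * t)‖ ≠ 0 := by
        rw [← hnorm]; simpa using ht
      have hc : Continuous (fun r : ℝ => ‖1 - (r : ℂ) * Complex.exp (2 * Complex.I * t)‖) := by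
        fun_prop
      exact ((hc.tendsto 1).mono_left nhdsWithin_le_nhds).log hne
  have heq : (fun r : ℝ => ∑' n : ℕ, r ^ n * Real.sin (2 * n * θ) / (n : ℝ) ^ 2)
      =ᶠ[nhdsWithin 1 (Set.Iio 1)] (fun r : ℝ => -2 * ∫ t in (0:ℝ)..θ,
        Real.log ‖1 - (r : ℂ) * Complex.exp (2 * Complex.I * t)‖) := by
    filter_upwards [hev] with r hr
    exact (sin_sum_r θ r (by linarith [hr.1]) hr.2).tsum_eq
  have := tendsto_nhds_unique L1 ((L2.const_mul (-2)).congr' heq.symm)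
  have h2 := hs.hasSum
  rw [this] at h2
  convert! h2 using 1
  unfold Lob
  ring

/-- For `0 ≤ θ ≤ π`, `Li₂(e^{2iθ}) = π²/6 + θ(θ-π) + 2i·Λ(θ)`. -/
theorem Li2_unitCircle (θ : ℝ) (h0 : 0 ≤ θ) (h1 : θ ≤ Real.pi) :
    Li2 (Complex.exp (2 * Complex.I * (θ : ℂ))) =
      (Real.pi : ℂ) ^ 2 / 6 + (θ : ℂ) * ((θ : ℂ) - (Real.pi : ℂ)) +
        2 * Complex.I * (Lob θ : ℂ) := by
  have e : 2 * Complex.I * (θ : ℂ) = ((2 * θ : ℝ) : ℂ) * Complex.I := by push_cast; ring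
  have hA := Li2_hasSum (Complex.exp (2 * Complex.I * (θ : ℂ)))
    (by rw [e, Complex.norm_exp_ofReal_mul_I])
  have hc := Complex.hasSum_ofReal.mpr (cos_sum θ h0 h1)
  have hs := (Complex.hasSum_ofReal.mpr (sin_sum θ)).mul_left Complex.I
  have hB := hc.add hs
  have hf : (fun n : ℕ => Complex.exp (2 * Complex.I * (θ : ℂ)) ^ n / (n : ℂ) ^ 2)
      = (fun n : ℕ => ((Real.cos (2 * n * θ) / (n : ℝ) ^ 2 : ℝ) : ℂ)
          + Complex.I * ((Real.sin (2 * n * θ) / (n : ℝ) ^ 2 : ℝ) : ℂ)) := by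
    ext n
    rw [← Complex.exp_nat_mul,
      show (n : ℂ) * (2 * Complex.I * θ) = ((2 * n * θ : ℝ) : ℂ) * Complex.I by push_cast; ring,
      Complex.exp_mul_I, ← Complex.ofReal_cos, ← Complex.ofReal_sin]
    push_cast
    ring
  rw [hf] at hA
  rw [hA.unique hB]
  push_cast
  ring
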